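/- In the Gaussian signal model with σ_a = σ_b (the symmetric case), consider the myopic-play dynamics started from S_a(0) = S_b(0) = ℝ. For any date t, if the two players' actions differ at every date τ ≤ t, then m_a(t+1) = −m_b(t+1), the belief sets S_a(t+1) and S_b(t+1) are nondegenerate intervals with S_a(t+1) = −S_b(t+1) (where −S = {−u : u ∈ S}), and m_i(t+1) lies in the interior of S_i(t+1) for i = a, b. -/

import Mathlib

/-!
In the symmetric case the posterior mean is a positive multiple of `s + u`, and the conditional
density has the form `C * exp (-b * (u - k * s) ^ 2)` with `C, b, k > 0`
(`phi_gaussian_form`). A myopic threshold against `S` is therefore a solution `s` of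
`∫ u in S, (s + u) * phi s u = 0`, i.e. `-s` is the conditional mean of the opponent's signal.

* *Uniqueness* (`zero_not_lt`): for `s < s'` the likelihood ratio `phi s' u / phi s u` increases
  in `u`, so tilting from `s` to `s'` moves mass upwards, and two zeros cannot coexist.
* *Interiority* (`neg_mem_interior_of_zero`): a mean of an interval of positive mass is an
  interior point of that interval.
* *Mirror symmetry* (`zero_reflect`): `phi (-s) (-u) = phi s u`, so if `S_a = -S_b` then `-m_b` is
  a zero for the same belief set as `m_a`, whence `m_a = -m_b`. When the actions differ, one belief
  set is cut from above at its threshold and the other from below, which preserves `S_a = -S_b`.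
-/


open MeasureTheory Set Filter

noncomputable section

/-- Posterior mean of the state given both signal values in the Gaussian model. -/
def postMean (σ σa σb sa sb : ℝ) : ℝ :=
  σ ^ 2 * (sa * σb ^ 2 + sb * σa ^ 2) / (σa ^ 2 * σb ^ 2 + σ ^ 2 * (σa ^ 2 + σb ^ 2))

/-- Conditional density of player `b`'s signal given player `a`'s signal `sa`. -/
def phi (σ σa σb sa u : ℝ) : ℝ :=
  Real.exp (-(u - sa * σ ^ 2 / (σ ^ 2 + σa ^ 2)) ^ 2 /
      (2 * ((σa ^ 2 * σb ^ 2 + σ ^ 2 * (σa ^ 2 + σb ^ 2)) / (σ ^ 2 + σa ^ 2)))) /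
    Real.sqrt (2 * Real.pi * ((σa ^ 2 * σb ^ 2 + σ ^ 2 * (σa ^ 2 + σb ^ 2)) / (σ ^ 2 + σa ^ 2)))

/-- Conditional expectation of the state given `sa` and the event `s_b ∈ S`. -/
def Ea (σ σa σb : ℝ) (sa : ℝ) (S : Set ℝ) : ℝ :=
  (∫ u in S, postMean σ σa σb sa u * phi σ σa σb sa u) / ∫ u in S, phi σ σa σb sa u

/-- The same conditional expectation from player `b`'s side. -/
def Eb (σ σa σb : ℝ) (sb : ℝ) (S : Set ℝ) : ℝ :=
  (∫ u in S, postMean σ σa σb u sb * phi σ σb σa sb u) / ∫ u in S, phi σ σb σa sb u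

/-- The myopic-play dynamics for the fixed type pair `(sa, sb)`, started from
`S_a(0) = S_b(0) = ℝ`. -/
def MyopicDynamics (σ σa σb sa sb : ℝ) (Sa Sb : ℕ → Set ℝ) (ma mb : ℕ → ℝ) : Prop :=
  Sa 0 = univ ∧ Sb 0 = univ ∧
  (∀ t s, 0 < ∫ u in Sb t, phi σ σa σb s u) ∧
  (∀ t s, 0 < ∫ u in Sa t, phi σ σb σa s u) ∧
  (∀ t, Ea σ σa σb (ma t) (Sb t) = 0) ∧
  (∀ t, Eb σ σa σb (mb t) (Sa t) = 0) ∧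
  (∀ t, Sa (t + 1) = Sa t ∩ (if ma t < sa then Ici (ma t) else Iic (ma t))) ∧
  (∀ t, Sb (t + 1) = Sb t ∩ (if mb t < sb then Ici (mb t) else Iic (mb t)))

lemma phi_gaussian_form (σ σa : ℝ) (hσ : 0 < σ) (hσa : 0 < σa) :
    ∃ C b k : ℝ, 0 < C ∧ 0 < b ∧ 0 < k ∧
      ∀ s u, phi σ σa σa s u = C * Real.exp (-b * (u - k * s) ^ 2) := by
  set v := (σa ^ 2 * σa ^ 2 + σ ^ 2 * (σa ^ 2 + σa ^ 2)) / (σ ^ 2 + σa ^ 2) with hv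
  have hvpos : 0 < v := by positivity
  refine ⟨(Real.sqrt (2 * Real.pi * v))⁻¹, (2 * v)⁻¹, σ ^ 2 / (σ ^ 2 + σa ^ 2),
    by positivity, by positivity, by positivity, fun s u => ?_⟩
  unfold phi
  rw [← hv, div_eq_inv_mul]
  congr 2
  rw [show s * σ ^ 2 / (σ ^ 2 + σa ^ 2) = σ ^ 2 / (σ ^ 2 + σa ^ 2) * s by ring]
  field_simp

section Gaussian

variable {σ σa : ℝ}

lemma phi_pos (hσ : 0 < σ) (hσa : 0 < σa) (s u : ℝ) : 0 < phi σ σa σa s u := by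
  obtain ⟨C, b, k, hC, hb, hk, h⟩ := phi_gaussian_form σ σa hσ hσa
  rw [h]; positivity

lemma phi_neg_neg (hσ : 0 < σ) (hσa : 0 < σa) (s u : ℝ) :
    phi σ σa σa (-s) (-u) = phi σ σa σa s u := by
  obtain ⟨C, b, k, hC, hb, hk, h⟩ := phi_gaussian_form σ σa hσ hσa
  rw [h, h]; congr 2; ring

lemma integrable_phi (hσ : 0 < σ) (hσa : 0 < σa) (s : ℝ) :
    Integrable (fun u => phi σ σa σa s u) := by
  obtain ⟨C, b, k, hC, hb, hk, h⟩ := phi_gaussian_form σ σa hσ hσa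
  simp only [h]
  exact ((integrable_exp_neg_mul_sq hb).comp_sub_right (k * s)).const_mul C

lemma integrable_add_mul_phi (hσ : 0 < σ) (hσa : 0 < σa) (c s : ℝ) :
    Integrable (fun u => (c + u) * phi σ σa σa s u) := by
  obtain ⟨C, b, k, hC, hb, hk, h⟩ := phi_gaussian_form σ σa hσ hσa
  have h1 := ((integrable_mul_exp_neg_mul_sq hb).comp_sub_right (k * s)).const_mul C
  have h2 := ((integrable_exp_neg_mul_sq hb).comp_sub_right (k * s)).const_mul (C * (c + k * s))
  refine (h1.add h2).congr (Eventually.of_forall fun u => ?_)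
  simp only [Pi.add_apply, h]
  ring

/-- Pointwise form of the monotone likelihood ratio property: both factors of
`(s + u) * (phi s' u - A * phi s u)` change sign at `u = -s`, where `A` is the likelihood ratio
there. -/
lemma exists_ratio_bound (hσ : 0 < σ) (hσa : 0 < σa) {s s' : ℝ} (hs : s < s') :
    ∃ A : ℝ, ∀ u, A * ((s + u) * phi σ σa σa s u) ≤ (s + u) * phi σ σa σa s' u := by
  obtain ⟨C, b, k, hC, hb, hk, h⟩ := phi_gaussian_form σ σa hσ hσa
  set l := 2 * b * k * (s' - s) with hl
  have hlpos : 0 < l := by have := sub_pos.2 hs; positivity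
  set c := b * k ^ 2 * (s ^ 2 - s' ^ 2) with hc
  have hratio : ∀ u, phi σ σa σa s' u = Real.exp (c + l * u) * phi σ σa σa s u := by
    intro u
    rw [h, h, mul_left_comm, ← Real.exp_add]
    congr 2
    rw [hl, hc]; ring
  refine ⟨Real.exp (c + l * (-s)), fun u => ?_⟩
  rw [hratio]
  have hp := phi_pos hσ hσa s u
  have key : 0 ≤ (s + u) * (Real.exp (c + l * u) - Real.exp (c + l * (-s))) := by
    rcases le_total (-s) u with hu | hu
    · exact mul_nonneg (by linarith) (sub_nonneg.2 (Real.exp_le_exp.2 (by nlinarith)))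
    · exact mul_nonneg_of_nonpos_of_nonpos (by linarith)
        (sub_nonpos.2 (Real.exp_le_exp.2 (by nlinarith)))
  nlinarith [mul_nonneg key hp.le]

/-- The map `s ↦ s + E[s_b | s, s_b ∈ S]` has at most one zero: no two zeros are strictly
ordered. The zero condition is multiplied out by the positive normalizing integral. -/
lemma zero_not_lt (hσ : 0 < σ) (hσa : 0 < σa) {S : Set ℝ}
    (hpos : ∀ s, 0 < ∫ u in S, phi σ σa σa s u) {s s' : ℝ}
    (h0 : ∫ u in S, (s + u) * phi σ σa σa s u = 0)
    (h0' : ∫ u in S, (s' + u) * phi σ σa σa s' u = 0) : ¬ s < s' := by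
  intro hs
  obtain ⟨A, hA⟩ := exists_ratio_bound hσ hσa hs
  have i1 := ((integrable_add_mul_phi hσ hσa s s).integrableOn (s := S)).const_mul A
  have i2 := (integrable_add_mul_phi hσ hσa s s').integrableOn (s := S)
  have i3 := ((integrable_phi hσ hσa s').integrableOn (s := S)).const_mul (s' - s)
  have h1 : 0 ≤ ∫ u in S, (s + u) * phi σ σa σa s' u := by
    have := integral_mono i1 i2 hA
    rwa [integral_const_mul, h0, mul_zero] at this
  have h2 : ∫ u in S, (s' + u) * phi σ σa σa s' u =
      (∫ u in S, (s + u) * phi σ σa σa s' u) + (s' - s) * ∫ u in S, phi σ σa σa s' u := by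
    rw [← integral_const_mul, ← integral_add i2 i3]
    congr 1; ext u; ring
  have h3 := mul_pos (sub_pos.2 hs) (hpos s')
  linarith

/-- The zero condition says that `-s` is the conditional mean of the signal on the interval `S`,
so it lies strictly between the ends of `S`. -/
lemma neg_mem_interior_of_zero (hσ : 0 < σ) (hσa : 0 < σa) {S : Set ℝ} (hS : S.OrdConnected)
    {s : ℝ} (hpos : 0 < ∫ u in S, phi σ σa σa s u)
    (h0 : ∫ u in S, (s + u) * phi σ σa σa s u = 0) : -s ∈ interior S := by
  by_contra hint
  have hm : MeasurableSet S := hS.measurableSet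
  have hi := (integrable_add_mul_phi hσ hσa s s).integrableOn (s := S)
  -- An integrand `(s + u) * phi s u` that vanishes almost everywhere on `S` makes `S` null.
  have hnull : ¬ (fun u => (s + u) * phi σ σa σa s u) =ᵐ[volume.restrict S] 0 := by
    intro hz
    have hne : ∀ᵐ u ∂(volume.restrict S), u ≠ -s := ae_restrict_of_ae (Measure.ae_ne volume (-s))
    have hF : ∀ᵐ u ∂(volume.restrict S), False := by
      filter_upwards [hz, hne] with u hu hu'
      rcases mul_eq_zero.1 hu with h | h
      · exact hu' (by linarith)
      · exact (phi_pos hσ hσa s u).ne' h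
    have : volume.restrict S = 0 := by
      rwa [eventually_false_iff_eq_bot, ae_eq_bot] at hF
    simp [this] at hpos
  -- A point outside the interior of an interval has the interval on one side.
  have hside : (∀ u ∈ S, -s ≤ u) ∨ (∀ u ∈ S, u ≤ -s) := by
    by_contra! hcon
    obtain ⟨⟨x, hx, hxs⟩, y, hy, hys⟩ := hcon
    exact hint (mem_interior_iff_mem_nhds.2
      (mem_of_superset (Ioo_mem_nhds hxs hys) (Ioo_subset_Icc_self.trans (hS.out hx hy))))
  rcases hside with h | h
  · refine hnull ((integral_eq_zero_iff_of_nonneg_ae ?_ hi).1 h0)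
    filter_upwards [ae_restrict_mem hm] with u hu
    exact mul_nonneg (by linarith [h u hu]) (phi_pos hσ hσa s u).le
  · have hz := (integral_eq_zero_iff_of_nonneg_ae
      (f := fun u => -((s + u) * phi σ σa σa s u)) ?_ hi.neg).1
      (by rw [integral_neg, h0, neg_zero])
    · refine hnull ?_
      filter_upwards [hz] with u hu
      exact neg_eq_zero.1 hu
    · filter_upwards [ae_restrict_mem hm] with u hu
      have := mul_nonneg (show 0 ≤ -(s + u) by linarith [h u hu]) (phi_pos hσ hσa s u).le
      show 0 ≤ -((s + u) * phi σ σa σa s u)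
      rwa [← neg_mul]

/-- A threshold against `-S` is the negative of a threshold against `S`. -/
lemma zero_reflect (hσ : 0 < σ) (hσa : 0 < σa) {S : Set ℝ} {s : ℝ}
    (h0 : ∫ u in -S, (s + u) * phi σ σa σa s u = 0) :
    ∫ u in S, (-s + u) * phi σ σa σa (-s) u = 0 := by
  have h := (Measure.measurePreserving_neg (volume : Measure ℝ)).setIntegral_preimage_emb
    (MeasurableEquiv.neg ℝ).measurableEmbedding
    (fun u => (-s + u) * phi σ σa σa (-s) u) S
  rw [← h]
  have hS : Neg.neg ⁻¹' S = -S := rfl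
  rw [hS, ← neg_eq_zero, ← integral_neg, ← h0]
  congr 1; ext u
  rw [phi_neg_neg hσ hσa]; ring

lemma postMean_eq (σ σa s u : ℝ) : postMean σ σa σa s u =
    σ ^ 2 * σa ^ 2 / (σa ^ 2 * σa ^ 2 + σ ^ 2 * (σa ^ 2 + σa ^ 2)) * (s + u) := by
  unfold postMean; ring

lemma zero_of_Ea (hσ : 0 < σ) (hσa : 0 < σa) {S : Set ℝ} {s : ℝ}
    (hpos : 0 < ∫ u in S, phi σ σa σa s u) (h : Ea σ σa σa s S = 0) :
    ∫ u in S, (s + u) * phi σ σa σa s u = 0 := by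
  unfold Ea at h
  have h1 := (div_eq_zero_iff.1 h).resolve_right hpos.ne'
  simp only [postMean_eq, mul_assoc] at h1
  rw [integral_const_mul] at h1
  exact (mul_eq_zero.1 h1).resolve_left (by positivity)

lemma Eb_eq_Ea (σ σa s : ℝ) (S : Set ℝ) : Eb σ σa σa s S = Ea σ σa σa s S := by
  simp only [Ea, Eb, postMean_eq, add_comm]

end Gaussian

/-- in the symmetric Gaussian case `σ_a = σ_b`, if actions differ at every
date `τ ≤ t`, then `m_a(t+1) = -m_b(t+1)`, the belief sets at `t+1` are nondegenerate
intervals that are mirror images of each other, and each threshold lies in the interior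
of the corresponding belief set. -/
theorem stmt10 (σ σa : ℝ) (hσ : 0 < σ) (hσa : 0 < σa)
    (sa sb : ℝ) (Sa Sb : ℕ → Set ℝ) (ma mb : ℕ → ℝ)
    (hdyn : MyopicDynamics σ σa σa sa sb Sa Sb ma mb)
    (t : ℕ)
    (hne : ∀ τ ≤ t, sa ≠ ma τ ∧ sb ≠ mb τ)
    (hdis : ∀ τ ≤ t, (ma τ < sa ↔ ¬ mb τ < sb)) :
    ma (t + 1) = -mb (t + 1) ∧
    Sa (t + 1) = -Sb (t + 1) ∧
    (Sa (t + 1)).Nontrivial ∧ (Sb (t + 1)).Nontrivial ∧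
    (Sa (t + 1)).OrdConnected ∧ (Sb (t + 1)).OrdConnected ∧
    ma (t + 1) ∈ interior (Sa (t + 1)) ∧ mb (t + 1) ∈ interior (Sb (t + 1)) := by
  obtain ⟨hA0, hB0, hpb, hpa, hEa, hEb, hSa, hSb⟩ := hdyn
  have hza := fun n => zero_of_Ea hσ hσa (hpb n _) (hEa n)
  have hzb := fun n => zero_of_Ea hσ hσa (hpa n _) ((Eb_eq_Ea σ σa _ _).symm.trans (hEb n))
  have hoc : ∀ n, (Sa n).OrdConnected ∧ (Sb n).OrdConnected := by
    intro n
    induction n with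
    | zero => rw [hA0, hB0]; exact ⟨ordConnected_univ, ordConnected_univ⟩
    | succ n ih =>
      rw [hSa, hSb]
      constructor
      · split_ifs
        exacts [ih.1.inter ordConnected_Ici, ih.1.inter ordConnected_Iic]
      · split_ifs
        exacts [ih.2.inter ordConnected_Ici, ih.2.inter ordConnected_Iic]
  -- By reflection `-mb n` is a threshold against `Sb n`, and thresholds are unique.
  have hthr : ∀ n, Sa n = -Sb n → ma n = -mb n := by
    intro n hn
    have hz := hzb n
    rw [hn] at hz
    have hz' := zero_reflect hσ hσa hz
    exact le_antisymm (not_lt.1 (zero_not_lt hσ hσa (hpb n) hz' (hza n)))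
      (not_lt.1 (zero_not_lt hσ hσa (hpb n) (hza n) hz'))
  have hsym : ∀ n ≤ t + 1, Sa n = -Sb n := by
    intro n
    induction n with
    | zero => intro _; rw [hA0, hB0, neg_univ]
    | succ n ih =>
      intro hn
      have hS := ih (by omega)
      have hm := hthr n hS
      have hd := hdis n (by omega)
      rw [hSa, hSb, inter_neg, ← hS]
      by_cases h : ma n < sa
      · rw [if_pos h, if_neg (hd.1 h), neg_Iic, hm]
      · rw [if_neg h, if_pos (not_not.1 (mt hd.2 h)), neg_Ici, hm]
  have hS := hsym (t + 1) le_rfl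
  have hm := hthr (t + 1) hS
  have hib : mb (t + 1) ∈ interior (Sb (t + 1)) := by
    have := neg_mem_interior_of_zero hσ hσa (hoc (t + 1)).2 (hpb _ _) (hza (t + 1))
    rwa [hm, neg_neg] at this
  have hia : ma (t + 1) ∈ interior (Sa (t + 1)) := by
    have := neg_mem_interior_of_zero hσ hσa (hoc (t + 1)).1 (hpa _ _) (hzb (t + 1))
    rwa [← hm] at this
  have hnt : ∀ {S : Set ℝ} {x : ℝ}, x ∈ interior S → S.Nontrivial := fun h =>
    (infinite_of_mem_nhds _ (mem_interior_iff_mem_nhds.1 h)).nontrivial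
  exact ⟨hm, hS, hnt hia, hnt hib, (hoc _).1, (hoc _).2, hia, hib⟩
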